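/- Let k, q ≥ 1 with k ≤ |X|, and let P_0, P_1, …, P_q be database properties. Then for every integer d ≥ 1 and all unitaries U_1, …, U_{q−1} of the ℓ²-space with orthonormal basis indexed by X^k × Y^k × {1,…,d}: the operator norm ‖ P_q · cO^k · (U_{q−1} ⊗ 1) · cO^k ⋯ (U_1 ⊗ 1) · cO^k · (¬P_0) ‖ is at most Σ_{s=1}^{q} ⟦¬P_{s−1} → P_s⟧_k. Here all operators act on the ℓ²-space with basis indexed by X^k × Y^k × {1,…,d} × DB: each U_i acts on the first three factors, cO^k acts on the X^k × Y^k and DB factors, and the projections P_q and ¬P_0 act on the DB factor. -/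

import Mathlib

noncomputable section

/- `Ȳ = Y ∪ {⊥}` is modeled by `Option Y` (`⊥ = none`), databases by `X → Option Y`,
and `ℂ[DB]` by `EuclideanSpace ℂ (X → Option Y)`. -/

/-- matrix (in the computational basis) of the single-register unitary `Comp` -/
def compMat (Y : Type*) [Fintype Y] [DecidableEq Y] :
    Matrix (Option Y) (Option Y) ℂ :=
  Matrix.of fun u v =>
    match u, v with
    | none, none => 0
    | some _, none => ((Real.sqrt (Fintype.card Y) : ℝ) : ℂ)⁻¹
    | none, some _ => ((Real.sqrt (Fintype.card Y) : ℝ) : ℂ)⁻¹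
    | some a, some b => (if a = b then (1 : ℂ) else 0) - ((Fintype.card Y : ℕ) : ℂ)⁻¹

/-- matrix of the diagonal unitary `O_ŷ` associated to a character `ŷ` of `Y` -/
def oMat {Y : Type*} [Fintype Y] [DecidableEq Y] [AddCommGroup Y] (c : AddChar Y ℂ) :
    Matrix (Option Y) (Option Y) ℂ :=
  Matrix.diagonal fun u => Option.elim u 1 fun r => c r

/-- matrix of the single-register compressed oracle `cO_ŷ = Comp ∘ O_ŷ ∘ Comp` -/
def cOMat {Y : Type*} [Fintype Y] [DecidableEq Y] [AddCommGroup Y] (c : AddChar Y ℂ) :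
    Matrix (Option Y) (Option Y) ℂ :=
  compMat Y * oMat c * compMat Y

/-- a single-register operator (given by its matrix `m`) acting at register `x0` -/
def liftMat {X Y : Type*} [Fintype X] [DecidableEq X] [DecidableEq Y] (x0 : X)
    (m : Matrix (Option Y) (Option Y) ℂ) :
    Matrix (X → Option Y) (X → Option Y) ℂ :=
  Matrix.of fun D' D => if ∀ a, a ≠ x0 → D' a = D a then m (D' x0) (D x0) else 0

/-- matrix of `cO_{x,ŷ}`: the composition of `cO_{ŷ i}` acting at register `x i` -/
def cOparMat {X Y : Type*} [Fintype X] [DecidableEq X] [Fintype Y] [DecidableEq Y]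
    [AddCommGroup Y] {k : ℕ} (x : Fin k → X) (c : Fin k → AddChar Y ℂ) :
    Matrix (X → Option Y) (X → Option Y) ℂ :=
  (List.ofFn fun i : Fin k => liftMat (x i) (cOMat (c i))).prod

/-- matrix of the orthogonal projection onto `span{e_D : D ∈ P}` -/
def projMat {ι : Type*} [DecidableEq ι] (P : Set ι) : Matrix ι ι ℂ := by
  classical exact Matrix.of fun i j => if i = j ∧ i ∈ P then 1 else 0

/-- the (continuous linear) operator on `ℓ²` given by a matrix -/
def toOp {ι : Type*} [Fintype ι] [DecidableEq ι] (m : Matrix ι ι ℂ) :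
    EuclideanSpace ℂ ι →L[ℂ] EuclideanSpace ℂ ι :=
  LinearMap.toContinuousLinearMap (Matrix.toEuclideanLin m)

/-- `D|^x`: the set of databases that coincide with `D` outside of `x` -/
def agreeOff {X Y : Type*} {k : ℕ} (D : X → Option Y) (x : Fin k → X) :
    Set (X → Option Y) :=
  {D' | ∀ a : X, (∀ i, x i ≠ a) → D' a = D a}

/-- The quantum transition capacity `⟦P → P' | X₀⟧_k`: the supremum, over all `x ∈ X₀^k`
with pairwise distinct entries, all `k`-tuples `ŷ` of characters of `Y` and all databases `D`,
of `‖P'|_{D|^x} ∘ cO_{x,ŷ} ∘ P|_{D|^x}‖` (`0` if the range is empty). -/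
def qtc {X Y : Type*} [Fintype X] [DecidableEq X] [Fintype Y] [DecidableEq Y]
    [AddCommGroup Y] (P P' : Set (X → Option Y)) (k : ℕ) (X₀ : Set X) : ℝ :=
  sSup {v : ℝ | ∃ (x : Fin k → X) (c : Fin k → AddChar Y ℂ) (D : X → Option Y),
    Function.Injective x ∧ (∀ i, x i ∈ X₀) ∧
    v = ‖(toOp (projMat (P' ∩ agreeOff D x))).comp
          ((toOp (cOparMat x c)).comp (toOp (projMat (P ∩ agreeOff D x))))‖}

end

noncomputable section

/-- matrix of `Comp_DB`: `Comp` applied at every database register -/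
def compDBMat (X Y : Type*) [Fintype X] [Fintype Y] [DecidableEq Y] :
    Matrix (X → Option Y) (X → Option Y) ℂ :=
  Matrix.of fun D' D => ∏ a : X, compMat Y (D' a) (D a)

/-- the basis permutation underlying `Õ₀` (extended by the identity on the
`{1,…,d}` factor): `(x, y, w, D) ↦ (x, y', w, D)` with `y'_i = y_i + D (x_i)`
whenever `D (x_i) ∈ Y`, and `y'_i = y_i` when `D (x_i) = ⊥` -/
def shiftIdx {X Y : Type*} [AddCommGroup Y] {k d : ℕ}
    (p : ((Fin k → X) × (Fin k → Y) × Fin d) × (X → Option Y)) :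
    ((Fin k → X) × (Fin k → Y) × Fin d) × (X → Option Y) :=
  ⟨⟨p.1.1, fun i => (p.2 (p.1.1 i)).elim (p.1.2.1 i) (fun v => p.1.2.1 i + v), p.1.2.2⟩, p.2⟩

/-- matrix of `cO^k = (1 ⊗ Comp_DB) ∘ Õ₀ ∘ (1 ⊗ Comp_DB)`, acting on the
`X^k × Y^k` and `DB` factors (and as the identity on the `{1,…,d}` factor) -/
def cOkExtMat (X Y : Type*) [Fintype X] [DecidableEq X] [Fintype Y] [DecidableEq Y]
    [AddCommGroup Y] (k d : ℕ) :
    Matrix (((Fin k → X) × (Fin k → Y) × Fin d) × (X → Option Y))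
           (((Fin k → X) × (Fin k → Y) × Fin d) × (X → Option Y)) ℂ := by
  classical
  exact (Matrix.of fun p' p => if p'.1 = p.1 then compDBMat X Y p'.2 p.2 else 0)
      * (Matrix.of fun p' p => if p' = shiftIdx p then 1 else 0)
      * (Matrix.of fun p' p => if p'.1 = p.1 then compDBMat X Y p'.2 p.2 else 0)

/-- matrix of an operator on `ℓ²` -/
def matOf {ι : Type*} [Fintype ι] [DecidableEq ι]
    (A : EuclideanSpace ℂ ι →L[ℂ] EuclideanSpace ℂ ι) : Matrix ι ι ℂ :=
  Matrix.of fun i j =>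
    inner (𝕜 := ℂ) (EuclideanSpace.single i 1) (A (EuclideanSpace.single j 1))

/-- matrix of `A ⊗ 1`: an operator `A` on the first three factors, extended by the
identity on the `DB` factor -/
def uExtMat (X Y : Type*) [Fintype X] [DecidableEq X] [Fintype Y] [DecidableEq Y]
    (k d : ℕ)
    (A : EuclideanSpace ℂ ((Fin k → X) × (Fin k → Y) × Fin d) →L[ℂ]
         EuclideanSpace ℂ ((Fin k → X) × (Fin k → Y) × Fin d)) :
    Matrix (((Fin k → X) × (Fin k → Y) × Fin d) × (X → Option Y))
           (((Fin k → X) × (Fin k → Y) × Fin d) × (X → Option Y)) ℂ := by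
  classical
  exact Matrix.of fun p' p => if p'.2 = p.2 then matOf A p'.1 p.1 else 0

/-- matrix of a database-property projection acting on the `DB` factor -/
def projDBMat (X Y : Type*) [Fintype X] [DecidableEq X] [Fintype Y] [DecidableEq Y]
    (k d : ℕ) (P : Set (X → Option Y)) :
    Matrix (((Fin k → X) × (Fin k → Y) × Fin d) × (X → Option Y))
           (((Fin k → X) × (Fin k → Y) × Fin d) × (X → Option Y)) ℂ := by
  classical
  exact Matrix.of fun p' p => if p' = p ∧ p.2 ∈ P then 1 else 0

/-- `chainOp cO Us q = cO ∘ Us (q-1) ∘ cO ∘ ⋯ ∘ Us 1 ∘ cO` (with `q` copies of `cO`) -/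
def chainOp {V : Type*} [NormedAddCommGroup V] [NormedSpace ℂ V]
    (cO : V →L[ℂ] V) (Us : ℕ → V →L[ℂ] V) : ℕ → (V →L[ℂ] V)
  | 0 => ContinuousLinearMap.id ℂ V
  | 1 => cO
  | n + 2 => cO.comp ((Us (n + 1)).comp (chainOp cO Us (n + 1)))

open Matrix
open scoped ComplexConjugate

section OperatorNorm

variable {ι κ : Type*} [Fintype ι] [DecidableEq ι]

lemma toOp_eq_toEuclideanCLM (m : Matrix ι ι ℂ) :
    toOp m = Matrix.toEuclideanCLM (n := ι) (𝕜 := ℂ) m := rfl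

lemma toOp_mul (m n : Matrix ι ι ℂ) : toOp (m * n) = (toOp m).comp (toOp n) :=
  map_mul (Matrix.toEuclideanCLM (n := ι) (𝕜 := ℂ)) m n

lemma toOp_add (m n : Matrix ι ι ℂ) : toOp (m + n) = toOp m + toOp n :=
  map_add (Matrix.toEuclideanCLM (n := ι) (𝕜 := ℂ)) m n

lemma toOp_one : toOp (1 : Matrix ι ι ℂ) = ContinuousLinearMap.id ℂ _ :=
  map_one (Matrix.toEuclideanCLM (n := ι) (𝕜 := ℂ))

lemma norm_toOp_le {m : Matrix ι ι ℂ} {C : ℝ} (hC : 0 ≤ C)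
    (h : ∀ v : ι → ℂ, ∑ i, ‖(m *ᵥ v) i‖ ^ 2 ≤ C ^ 2 * ∑ i, ‖v i‖ ^ 2) : ‖toOp m‖ ≤ C := by
  refine (toOp m).opNorm_le_bound hC fun x => ?_
  refine (sq_le_sq₀ (norm_nonneg _) (by positivity)).mp ?_
  rw [mul_pow, EuclideanSpace.norm_sq_eq, EuclideanSpace.norm_sq_eq]
  exact h x.ofLp

lemma sum_norm_sq_mulVec_le {m : Matrix ι ι ℂ} {C : ℝ} (h : ‖toOp m‖ ≤ C) (v : ι → ℂ) :
    ∑ i, ‖(m *ᵥ v) i‖ ^ 2 ≤ C ^ 2 * ∑ i, ‖v i‖ ^ 2 := by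
  have h1 := ((toOp m).le_of_opNorm_le h (WithLp.toLp 2 v))
  have h2 := pow_le_pow_left₀ (norm_nonneg _) h1 2
  rw [mul_pow, EuclideanSpace.norm_sq_eq, EuclideanSpace.norm_sq_eq] at h2
  exact h2

lemma norm_toOp_le_one_of_unitary {m : Matrix ι ι ℂ} (h : mᴴ * m = 1) : ‖toOp m‖ ≤ 1 := by
  have h1 : star (toOp m) * toOp m = 1 := by
    rw [toOp_eq_toEuclideanCLM, ← map_star, ← map_mul, Matrix.star_eq_conjTranspose, h, map_one]
  have h2 := CStarRing.norm_star_mul_self (x := toOp m)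
  rw [h1] at h2
  have h3 : ‖(1 : EuclideanSpace ℂ ι →L[ℂ] EuclideanSpace ℂ ι)‖ ≤ 1 :=
    ContinuousLinearMap.norm_id_le
  nlinarith [norm_nonneg (toOp m)]

lemma norm_toOp_diagonal_le_one {w : ι → ℂ} (h : ∀ i, ‖w i‖ ≤ 1) :
    ‖toOp (Matrix.diagonal w)‖ ≤ 1 := by
  rw [toOp_eq_toEuclideanCLM, Matrix.l2_opNorm_toEuclideanCLM, Matrix.l2_opNorm_diagonal]
  exact (pi_norm_le_iff_of_nonneg zero_le_one).2 h

omit [Fintype ι] in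
lemma projMat_eq_diagonal (P : Set ι) : projMat P = Matrix.diagonal (P.indicator 1 : ι → ℂ) := by
  classical
  ext i j
  by_cases h : i = j
  · subst h; simp [projMat, Set.indicator_apply]
  · simp [projMat, h]

lemma norm_toOp_projMat_le_one (P : Set ι) : ‖toOp (projMat P)‖ ≤ 1 := by
  classical
  rw [projMat_eq_diagonal]
  refine norm_toOp_diagonal_le_one fun i => ?_
  by_cases h : i ∈ P <;> simp [h]

omit [Fintype ι] in
lemma projMat_add_compl (P : Set ι) : projMat P + projMat Pᶜ = 1 := by
  rw [projMat_eq_diagonal, projMat_eq_diagonal, Matrix.diagonal_add, ← Matrix.diagonal_one]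
  exact congrArg _ (Set.indicator_self_add_compl P 1)

/-- The norm of a matrix that is block diagonal for the fibers of `f` is controlled by the norms
of its blocks. -/
lemma norm_toOp_le_of_blocks [DecidableEq κ] (f : ι → κ) {m : Matrix ι ι ℂ} {C : ℝ} (hC : 0 ≤ C)
    (hm : ∀ i j, f i ≠ f j → m i j = 0)
    (h : ∀ i₀, ‖toOp (projMat {i | f i = f i₀} * m * projMat {i | f i = f i₀})‖ ≤ C) :
    ‖toOp m‖ ≤ C := by
  refine norm_toOp_le hC fun v => ?_
  have key : ∀ g : ι → ℝ, ∑ i, g i = ∑ b ∈ Finset.univ.image f, ∑ i with f i = b, g i :=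
    fun g => (Finset.sum_fiberwise_of_maps_to
      (fun i _ => Finset.mem_image_of_mem f (Finset.mem_univ i)) _).symm
  rw [key, key, Finset.mul_sum]
  refine Finset.sum_le_sum fun b hb => ?_
  obtain ⟨i₀, -, rfl⟩ := Finset.mem_image.1 hb
  let w : ι → ℂ := fun i => if f i = f i₀ then v i else 0
  have h1 := sum_norm_sq_mulVec_le (h i₀) w
  have h2 : ∑ i, ‖w i‖ ^ 2 = ∑ i with f i = f i₀, ‖v i‖ ^ 2 := by
    rw [Finset.sum_filter]
    refine Finset.sum_congr rfl fun i _ => ?_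
    by_cases hi : f i = f i₀ <;> simp [w, hi]
  rw [h2] at h1
  refine le_trans (le_of_eq ?_) h1
  rw [Finset.sum_filter]
  refine Finset.sum_congr rfl fun i _ => ?_
  rw [projMat_eq_diagonal]
  simp only [Matrix.mulVec, dotProduct, Matrix.mul_diagonal, Matrix.diagonal_mul,
    Set.indicator_apply, Set.mem_ofPred_eq]
  by_cases hi : f i = f i₀
  · simp only [hi, if_true]
    congr 2
    refine Finset.sum_congr rfl fun j _ => ?_
    by_cases hj : f j = f i₀
    · simp [w, hj]
    · simp [w, hj, hm i j (fun h => hj (h ▸ hi))]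
  · simp [hi]

end OperatorNorm

section Tensor

variable {X n : Type*} [Fintype X] [DecidableEq X] [Fintype n] [DecidableEq n]

/-- The tensor product of the single-register operators `m a`. -/
def tensorMat (m : X → Matrix n n ℂ) : Matrix (X → n) (X → n) ℂ :=
  Matrix.of fun D' D => ∏ a, m a (D' a) (D a)

omit [DecidableEq n] in
lemma tensorMat_mul (m m' : X → Matrix n n ℂ) :
    tensorMat m * tensorMat m' = tensorMat (m * m') := by
  ext D' D
  simp only [tensorMat, Matrix.mul_apply, Matrix.of_apply, Pi.mul_apply, ← Finset.prod_mul_distrib]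
  rw [Finset.prod_univ_sum, Fintype.piFinset_univ]

omit [DecidableEq X] [Fintype n] in
lemma tensorMat_one : tensorMat (1 : X → Matrix n n ℂ) = 1 := by
  ext D' D
  by_cases h : D' = D
  · subst h; simp [tensorMat]
  · obtain ⟨a, ha⟩ := Function.ne_iff.1 h
    rw [Matrix.one_apply_ne h]
    exact Finset.prod_eq_zero (Finset.mem_univ a) (Matrix.one_apply_ne ha)

omit [DecidableEq X] [Fintype n] [DecidableEq n] in
lemma tensorMat_conjTranspose (m : X → Matrix n n ℂ) :
    (tensorMat m)ᴴ = tensorMat fun a => (m a)ᴴ := by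
  ext D' D
  simp [tensorMat, Matrix.conjTranspose_apply]

omit [DecidableEq X] [Fintype n] in
lemma tensorMat_diagonal (w : X → n → ℂ) :
    tensorMat (fun a => Matrix.diagonal (w a)) = Matrix.diagonal fun D => ∏ a, w a (D a) := by
  ext D' D
  by_cases h : D' = D
  · subst h; simp [tensorMat]
  · obtain ⟨a, ha⟩ := Function.ne_iff.1 h
    rw [Matrix.diagonal_apply_ne _ h]
    exact Finset.prod_eq_zero (Finset.mem_univ a) (Matrix.diagonal_apply_ne _ ha)

omit [DecidableEq X] [Fintype n] in
lemma tensorMat_apply_eq_zero {m : X → Matrix n n ℂ} {a : X} (ha : m a = 1) {D' D : X → n}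
    (h : D' a ≠ D a) : tensorMat m D' D = 0 :=
  Finset.prod_eq_zero (Finset.mem_univ a) (by rw [ha, Matrix.one_apply_ne h])

end Tensor

section CompressedOracle

variable {X Y : Type*} [Fintype X] [DecidableEq X] [Fintype Y] [DecidableEq Y] [AddCommGroup Y]

lemma compMat_mul_self : compMat Y * compMat Y = 1 := by
  have hM : ((Fintype.card Y : ℕ) : ℂ) ≠ 0 := Nat.cast_ne_zero.2 Fintype.card_ne_zero
  have hs : ((Real.sqrt (Fintype.card Y) : ℝ) : ℂ)⁻¹ * ((Real.sqrt (Fintype.card Y) : ℝ) : ℂ)⁻¹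
      = ((Fintype.card Y : ℕ) : ℂ)⁻¹ := by
    rw [← mul_inv, ← Complex.ofReal_mul, Real.mul_self_sqrt (Nat.cast_nonneg _)]
    simp
  ext u v
  rw [Matrix.mul_apply, Fintype.sum_option]
  cases u <;> cases v <;>
    simp [compMat, hs, hM, sub_mul, mul_sub, Finset.sum_sub_distrib, Matrix.one_apply]
  all_goals field_simp; ring

omit [AddCommGroup Y] in
lemma compMat_conjTranspose : (compMat Y)ᴴ = compMat Y := by
  ext u v
  cases u <;> cases v <;> simp [compMat, Matrix.conjTranspose_apply, eq_comm, apply_ite conj]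

lemma oMat_one : oMat (1 : AddChar Y ℂ) = 1 := by
  rw [oMat, ← Matrix.diagonal_one]
  congr 1
  ext u
  cases u <;> simp

lemma oMat_mul (c c' : AddChar Y ℂ) : oMat (c * c') = oMat c * oMat c' := by
  rw [oMat, oMat, oMat, Matrix.diagonal_mul_diagonal]
  congr 1
  ext u
  cases u <;> simp

lemma oMat_conjTranspose (c : AddChar Y ℂ) : (oMat c)ᴴ = oMat c⁻¹ := by
  rw [oMat, oMat, Matrix.diagonal_conjTranspose]
  congr 1
  ext u
  cases u <;> simp [AddChar.inv_apply, AddChar.map_neg_eq_conj]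

lemma cOMat_one : cOMat (1 : AddChar Y ℂ) = 1 := by
  rw [cOMat, oMat_one, mul_one, compMat_mul_self]

lemma cOMat_mul (c c' : AddChar Y ℂ) : cOMat (c * c') = cOMat c * cOMat c' := by
  have h : compMat Y * oMat c * compMat Y * (compMat Y * oMat c' * compMat Y)
      = compMat Y * oMat c * (compMat Y * compMat Y) * (oMat c' * compMat Y) := by
    simp only [mul_assoc]
  rw [cOMat, cOMat, cOMat, h, compMat_mul_self, oMat_mul]
  simp only [mul_assoc, mul_one]

lemma cOMat_conjTranspose (c : AddChar Y ℂ) : (cOMat c)ᴴ = cOMat c⁻¹ := by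
  simp only [cOMat, Matrix.conjTranspose_mul, compMat_conjTranspose, oMat_conjTranspose, mul_assoc]

/-- The compressed oracle with one character per database register, as a homomorphism. -/
def cODBHom : (X → AddChar Y ℂ) →* Matrix (X → Option Y) (X → Option Y) ℂ where
  toFun g := tensorMat fun a => cOMat (g a)
  map_one' := by
    simp only [Pi.one_apply, cOMat_one]
    exact tensorMat_one
  map_mul' g g' := by
    simp only [Pi.mul_apply, cOMat_mul]
    exact (tensorMat_mul _ _).symm

lemma cODBHom_unitary (g : X → AddChar Y ℂ) : (cODBHom g)ᴴ * cODBHom g = 1 := by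
  have h : (cODBHom g)ᴴ = cODBHom g⁻¹ := by
    simp only [cODBHom, MonoidHom.coe_mk, OneHom.coe_mk, tensorMat_conjTranspose,
      cOMat_conjTranspose, Pi.inv_apply]
  rw [h, ← map_mul, inv_mul_cancel, map_one]

lemma cODBHom_mulSingle (x : X) (c : AddChar Y ℂ) :
    cODBHom (Pi.mulSingle x c) = liftMat x (cOMat c) := by
  ext D' D
  simp only [cODBHom, MonoidHom.coe_mk, OneHom.coe_mk, liftMat, Matrix.of_apply]
  split_ifs with h
  · rw [tensorMat, Matrix.of_apply, Finset.prod_eq_single x]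
    · simp
    · intro a _ ha
      rw [Pi.mulSingle_eq_of_ne ha, cOMat_one, h a ha, Matrix.one_apply_eq]
    · simp
  · push Not at h
    obtain ⟨a, ha, hD⟩ := h
    exact tensorMat_apply_eq_zero (a := a) (by rw [Pi.mulSingle_eq_of_ne ha, cOMat_one]) hD

lemma cOparMat_eq_cODBHom {k : ℕ} (x : Fin k → X) (c : Fin k → AddChar Y ℂ) :
    cOparMat x c = cODBHom (∏ i, Pi.mulSingle (x i) (c i)) := by
  rw [cOparMat, ← List.prod_ofFn, map_list_prod, List.map_ofFn]
  congr 2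
  ext1 i
  exact (cODBHom_mulSingle _ _).symm

lemma cODBHom_eq_comp_diagonal_comp (g : X → AddChar Y ℂ) :
    cODBHom g = compDBMat X Y *
      Matrix.diagonal (fun D => ∏ a, (D a).elim 1 fun r => g a r) * compDBMat X Y := by
  have h : compDBMat X Y = tensorMat fun _ => compMat Y := rfl
  rw [h, ← tensorMat_diagonal (fun a (u : Option Y) => u.elim 1 fun r => g a r), tensorMat_mul,
    tensorMat_mul]
  rfl

/-- A family of characters supported on few registers can be queried at pairwise distinct
registers. -/
lemma exists_injective_cOparMat_eq {k : ℕ} (hk : k ≤ Fintype.card X) (x : Fin k → X)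
    (c : Fin k → AddChar Y ℂ) :
    ∃ (x' : Fin k → X) (c' : Fin k → AddChar Y ℂ), Function.Injective x' ∧
      cOparMat x' c' = cOparMat x c := by
  have hcard : (Finset.univ.image x).card ≤ k :=
    Finset.card_image_le.trans (by simp)
  obtain ⟨t, hxt, -, ht⟩ := Finset.exists_subsuperset_card_eq
    (Finset.subset_univ (Finset.univ.image x)) hcard (by simpa using hk)
  let e := t.equivFinOfCardEq ht
  let g : X → AddChar Y ℂ := ∏ i, Pi.mulSingle (x i) (c i)
  have hinj : Function.Injective fun j => (e.symm j : X) :=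
    Subtype.val_injective.comp e.symm.injective
  refine ⟨fun j => e.symm j, fun j => g (e.symm j), hinj, ?_⟩
  rw [cOparMat_eq_cODBHom, cOparMat_eq_cODBHom]
  congr 1
  funext a
  rw [Finset.prod_apply]
  by_cases ha : a ∈ t
  · rw [Finset.prod_eq_single (e ⟨a, ha⟩)]
    · simp [g]
    · intro j _ hj
      refine Pi.mulSingle_eq_of_ne (fun h => hj ?_) _
      exact (e.symm_apply_eq.1 (Subtype.ext h.symm))
    · simp
  · rw [Finset.prod_eq_one fun j _ => Pi.mulSingle_eq_of_ne
      (fun h : a = e.symm j => ha (h ▸ (e.symm j).2)) _]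
    rw [Finset.prod_apply]
    refine (Finset.prod_eq_one fun i _ => Pi.mulSingle_eq_of_ne (fun h => ha ?_) _).symm
    exact hxt (Finset.mem_image.2 ⟨i, Finset.mem_univ i, h.symm⟩)

end CompressedOracle

/-- Parseval's identity for the characters of a finite abelian group. -/
lemma sum_addChar_norm_sq {G : Type*} [AddCommGroup G] [Fintype G] (f : G → ℂ) :
    ∑ ψ : AddChar G ℂ, ‖∑ y, ψ y * f y‖ ^ 2 = Fintype.card G * ∑ y, ‖f y‖ ^ 2 := by
  classical
  have h : ∀ ψ : AddChar G ℂ, ((‖∑ y, ψ y * f y‖ ^ 2 : ℝ) : ℂ)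
      = ∑ y, ∑ y', f y * conj (f y') * ψ (y - y') := by
    intro ψ
    rw [Complex.ofReal_pow, ← Complex.mul_conj', map_sum, Finset.sum_mul_sum]
    refine Finset.sum_congr rfl fun y _ => Finset.sum_congr rfl fun y' _ => ?_
    rw [sub_eq_add_neg, AddChar.map_add_eq_mul, AddChar.map_neg_eq_conj, map_mul]
    ring
  apply Complex.ofReal_injective
  rw [Complex.ofReal_sum, Finset.sum_congr rfl fun ψ _ => h ψ, Finset.sum_comm,
    Complex.ofReal_mul, Complex.ofReal_sum, Finset.mul_sum]
  refine Finset.sum_congr rfl fun y _ => ?_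
  rw [Finset.sum_comm, Finset.sum_eq_single y]
  · rw [← Finset.mul_sum, AddChar.sum_apply_eq_ite, if_pos (sub_self y), Complex.mul_conj']
    push_cast
    ring
  · intro y' _ hy
    rw [← Finset.mul_sum, AddChar.sum_apply_eq_ite, if_neg (sub_ne_zero.2 hy.symm), mul_zero]
  · simp

section Fourier

open Kronecker

variable {X Y : Type*} [Fintype X] [DecidableEq X] [Fintype Y] [DecidableEq Y] [AddCommGroup Y]
  {k d : ℕ}

/-- The Fourier transform on the `Y^k` factor. -/
def partialFourier (ψ : AddChar (Fin k → Y) ℂ)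
    (v : ((Fin k → X) × (Fin k → Y) × Fin d) × (X → Option Y) → ℂ) (x : Fin k → X) (w : Fin d) :
    (X → Option Y) → ℂ :=
  fun D => ∑ y, ψ y * v ((x, y, w), D)

omit [DecidableEq Y] in
lemma sum_norm_sq_partialFourier
    (v : ((Fin k → X) × (Fin k → Y) × Fin d) × (X → Option Y) → ℂ) :
    ∑ x, ∑ w, ∑ ψ : AddChar (Fin k → Y) ℂ, ∑ D, ‖partialFourier ψ v x w D‖ ^ 2
      = Fintype.card (Fin k → Y) * ∑ p, ‖v p‖ ^ 2 := by
  simp only [Fintype.sum_prod_type, Finset.mul_sum]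
  refine Finset.sum_congr rfl fun x _ => ?_
  rw [Finset.sum_comm (s := Finset.univ (α := Fin k → Y))]
  refine Finset.sum_congr rfl fun w _ => ?_
  rw [Finset.sum_comm, Finset.sum_comm (s := Finset.univ (α := Fin k → Y))]
  refine Finset.sum_congr rfl fun D _ => ?_
  rw [← Finset.mul_sum]
  exact sum_addChar_norm_sq _

lemma partialFourier_kronecker_mulVec (ψ : AddChar (Fin k → Y) ℂ)
    (A : Matrix (X → Option Y) (X → Option Y) ℂ)
    (v : ((Fin k → X) × (Fin k → Y) × Fin d) × (X → Option Y) → ℂ) (x : Fin k → X) (w : Fin d) :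
    partialFourier ψ (((1 : Matrix ((Fin k → X) × (Fin k → Y) × Fin d) _ ℂ) ⊗ₖ A) *ᵥ v) x w
      = A *ᵥ partialFourier ψ v x w := by
  have h : ∀ y D, (((1 : Matrix ((Fin k → X) × (Fin k → Y) × Fin d) _ ℂ) ⊗ₖ A) *ᵥ v) ((x, y, w), D)
      = ∑ D', A D D' * v ((x, y, w), D') := by
    intro y D
    rw [Matrix.mulVec, dotProduct, Fintype.sum_prod_type, Finset.sum_eq_single (x, y, w)]
    · simp
    · intro r _ hr
      simp [Matrix.one_apply_ne hr.symm]
    · simp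
  ext D
  simp only [partialFourier, h]
  simp only [Matrix.mulVec, dotProduct, partialFourier, Finset.mul_sum]
  rw [Finset.sum_comm]
  exact Finset.sum_congr rfl fun _ _ => Finset.sum_congr rfl fun _ _ => mul_left_comm _ _ _

/-- The `i`-th component of a character of `Y^k`. -/
def charComponent (ψ : AddChar (Fin k → Y) ℂ) (i : Fin k) : AddChar Y ℂ :=
  ψ.compAddMonoidHom (AddMonoidHom.single (fun _ => Y) i)

omit [Fintype Y] [DecidableEq Y] in
lemma prod_charComponent (ψ : AddChar (Fin k → Y) ℂ) (y : Fin k → Y) :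
    ∏ i, charComponent ψ i (y i) = ψ y := by
  have h := map_prod ψ.toMonoidHom
    (fun i => Multiplicative.ofAdd (Pi.single i (y i) : Fin k → Y)) Finset.univ
  rw [← ofAdd_sum, Finset.univ_sum_single] at h
  exact h.symm

/-- The total shift of the `Y^k` register by the entries of `D` at `x`. -/
def dbShift (x : Fin k → X) (D : X → Option Y) : Fin k → Y :=
  fun i => (D (x i)).elim 0 id

omit [Fintype X] [DecidableEq X] [Fintype Y] [DecidableEq Y] in
lemma shiftIdx_eq (x : Fin k → X) (y : Fin k → Y) (w : Fin d) (D : X → Option Y) :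
    shiftIdx ((x, y, w), D) = ((x, y + dbShift x D, w), D) := by
  have h : ∀ i, (D (x i)).elim (y i) (fun v => y i + v) = (y + dbShift x D) i := by
    intro i
    rw [Pi.add_apply, dbShift]
    cases D (x i) <;> simp
  simp only [shiftIdx, h]

omit [Fintype Y] [DecidableEq Y] in
lemma prod_elim_mulSingle (x : Fin k → X) (c : Fin k → AddChar Y ℂ) (D : X → Option Y) :
    ∏ a, (D a).elim 1 (fun r => (∏ i, Pi.mulSingle (x i) (c i) : X → AddChar Y ℂ) a r)
      = ∏ i, c i (dbShift x D i) := by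
  have h : ∀ a, (D a).elim 1 (fun r => (∏ i, Pi.mulSingle (x i) (c i) : X → AddChar Y ℂ) a r)
      = ∏ i, (Pi.mulSingle (x i) (c i) : X → AddChar Y ℂ) a ((D a).elim 0 id) := by
    intro a
    cases D a <;> simp [Finset.prod_apply, AddChar.prod_apply]
  rw [Finset.prod_congr rfl fun a _ => h a, Finset.prod_comm]
  refine Finset.prod_congr rfl fun i _ => ?_
  rw [Finset.prod_eq_single (x i)]
  · rw [Pi.mulSingle_eq_same, dbShift]
  · intro a _ ha
    rw [Pi.mulSingle_eq_of_ne ha, AddChar.one_apply]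
  · simp

/-- The matrix of the basis permutation `shiftIdx`. -/
def shiftMat (X Y : Type*) [DecidableEq X] [Fintype X] [DecidableEq Y] [AddCommGroup Y]
    (k d : ℕ) :
    Matrix (((Fin k → X) × (Fin k → Y) × Fin d) × (X → Option Y))
      (((Fin k → X) × (Fin k → Y) × Fin d) × (X → Option Y)) ℂ :=
  Matrix.of fun p' p => if p' = shiftIdx p then 1 else 0

lemma partialFourier_shift_mulVec (ψ : AddChar (Fin k → Y) ℂ)
    (v : ((Fin k → X) × (Fin k → Y) × Fin d) × (X → Option Y) → ℂ) (x : Fin k → X) (w : Fin d) :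
    partialFourier ψ (shiftMat X Y k d *ᵥ v) x w
      = Matrix.diagonal (fun D => ψ (dbShift x D)) *ᵥ partialFourier ψ v x w := by
  have h : ∀ y D, (shiftMat X Y k d *ᵥ v) ((x, y, w), D)
      = v ((x, y - dbShift x D, w), D) := by
    intro y D
    rw [Matrix.mulVec, dotProduct, Finset.sum_eq_single ((x, y - dbShift x D, w), D)]
    · simp [shiftMat, shiftIdx_eq]
    · rintro ⟨⟨x', y', w'⟩, D'⟩ _ hp
      rw [shiftMat, Matrix.of_apply, if_neg, zero_mul]
      rw [shiftIdx_eq]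
      intro he
      simp only [Prod.mk.injEq] at he
      obtain ⟨⟨rfl, rfl, rfl⟩, rfl⟩ := he
      simp at hp
    · simp
  ext D
  simp only [partialFourier, h, Matrix.mulVec_diagonal, Finset.mul_sum]
  rw [← Equiv.sum_comp (Equiv.addRight (dbShift x D))]
  refine Finset.sum_congr rfl fun y _ => ?_
  rw [Equiv.coe_addRight, add_sub_cancel_right, AddChar.map_add_eq_mul]
  ring

lemma cOkExtMat_eq : cOkExtMat X Y k d
    = (1 ⊗ₖ compDBMat X Y) * shiftMat X Y k d * (1 ⊗ₖ compDBMat X Y) := by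
  have h : (Matrix.of fun (p' p : ((Fin k → X) × (Fin k → Y) × Fin d) × (X → Option Y)) =>
      if p'.1 = p.1 then compDBMat X Y p'.2 p.2 else 0) = 1 ⊗ₖ compDBMat X Y := by
    ext p' p
    simp [Matrix.kroneckerMap_apply, Matrix.one_apply]
  rw [← h, cOkExtMat, shiftMat]

lemma partialFourier_cOkExtMat_mulVec (ψ : AddChar (Fin k → Y) ℂ)
    (v : ((Fin k → X) × (Fin k → Y) × Fin d) × (X → Option Y) → ℂ) (x : Fin k → X) (w : Fin d) :
    partialFourier ψ (cOkExtMat X Y k d *ᵥ v) x w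
      = cOparMat x (charComponent ψ) *ᵥ partialFourier ψ v x w := by
  rw [cOkExtMat_eq, ← Matrix.mulVec_mulVec, ← Matrix.mulVec_mulVec,
    partialFourier_kronecker_mulVec, partialFourier_shift_mulVec, partialFourier_kronecker_mulVec,
    cOparMat_eq_cODBHom, cODBHom_eq_comp_diagonal_comp, Matrix.mulVec_mulVec,
    Matrix.mulVec_mulVec]
  simp only [prod_elim_mulSingle, prod_charComponent, mul_assoc]

lemma norm_toOp_kronecker_cOkExtMat_le {A B : Matrix (X → Option Y) (X → Option Y) ℂ} {C : ℝ}
    (hC : 0 ≤ C) (h : ∀ (x : Fin k → X) (c : Fin k → AddChar Y ℂ),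
      ‖toOp (A * cOparMat x c * B : Matrix (X → Option Y) _ ℂ)‖ ≤ C) :
    ‖toOp (ι := ((Fin k → X) × (Fin k → Y) × Fin d) × (X → Option Y))
      ((1 ⊗ₖ A) * cOkExtMat X Y k d * (1 ⊗ₖ B))‖ ≤ C := by
  refine norm_toOp_le hC fun v => ?_
  have hM : (0 : ℝ) < Fintype.card (Fin k → Y) := Nat.cast_pos.2 Fintype.card_pos
  refine le_of_mul_le_mul_left ?_ hM
  rw [mul_left_comm, ← sum_norm_sq_partialFourier, ← sum_norm_sq_partialFourier]
  simp only [Finset.mul_sum _ _ (C ^ 2)]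
  refine Finset.sum_le_sum fun x _ => Finset.sum_le_sum fun w _ => Finset.sum_le_sum fun ψ _ => ?_
  rw [← Matrix.mulVec_mulVec, ← Matrix.mulVec_mulVec, partialFourier_kronecker_mulVec,
    partialFourier_cOkExtMat_mulVec, partialFourier_kronecker_mulVec, Matrix.mulVec_mulVec,
    Matrix.mulVec_mulVec, ← Finset.mul_sum]
  exact sum_norm_sq_mulVec_le (h x (charComponent ψ)) _

lemma norm_toOp_cOparMat_le_one (x : Fin k → X) (c : Fin k → AddChar Y ℂ) :
    ‖toOp (cOparMat x c)‖ ≤ 1 := by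
  rw [cOparMat_eq_cODBHom]
  exact norm_toOp_le_one_of_unitary (cODBHom_unitary _)

lemma norm_toOp_cOkExtMat_le_one : ‖toOp (cOkExtMat X Y k d)‖ ≤ 1 := by
  have h := norm_toOp_kronecker_cOkExtMat_le (X := X) (Y := Y) (k := k) (d := d)
    (A := 1) (B := 1) zero_le_one (by simpa using norm_toOp_cOparMat_le_one)
  simpa using h

omit [AddCommGroup Y] in
lemma projDBMat_eq (P : Set (X → Option Y)) : projDBMat X Y k d P = 1 ⊗ₖ projMat P := by
  ext ⟨r', D'⟩ ⟨r, D⟩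
  by_cases h : r' = r
  · by_cases hD : D' = D
    · subst h hD
      rw [Matrix.kroneckerMap_apply, Matrix.one_apply_eq, one_mul, projDBMat, projMat,
        Matrix.of_apply, Matrix.of_apply]
      by_cases hP : D' ∈ P
      · rw [if_pos ⟨rfl, hP⟩, if_pos ⟨rfl, hP⟩]
      · rw [if_neg (hP ·.2), if_neg (hP ·.2)]
    · simp [projDBMat, projMat, hD]
  · simp [projDBMat, h, Matrix.one_apply_ne h]

omit [AddCommGroup Y] in
lemma uExtMat_eq (A : EuclideanSpace ℂ ((Fin k → X) × (Fin k → Y) × Fin d) →L[ℂ]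
      EuclideanSpace ℂ ((Fin k → X) × (Fin k → Y) × Fin d)) :
    uExtMat X Y k d A = matOf A ⊗ₖ 1 := by
  ext ⟨r', D'⟩ ⟨r, D⟩
  simp [uExtMat, Matrix.one_apply]

end Fourier

lemma toOp_surjective {ι : Type*} [Fintype ι] [DecidableEq ι] :
    Function.Surjective (toOp (ι := ι)) := fun A =>
  ⟨(Matrix.toEuclideanCLM (n := ι) (𝕜 := ℂ)).symm A,
    (Matrix.toEuclideanCLM (n := ι) (𝕜 := ℂ)).apply_symm_apply A⟩

lemma toOp_injective {ι : Type*} [Fintype ι] [DecidableEq ι] :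
    Function.Injective (toOp (ι := ι)) := fun _ _ h =>
  (Matrix.toEuclideanCLM (n := ι) (𝕜 := ℂ)).injective h

lemma matOf_toOp {ι : Type*} [Fintype ι] [DecidableEq ι] (m : Matrix ι ι ℂ) :
    matOf (toOp m) = m := by
  ext i j
  have h : (toOp m (EuclideanSpace.single j 1)).ofLp = m *ᵥ Pi.single j 1 := rfl
  simp [matOf, EuclideanSpace.inner_single_left, h]

lemma matOf_unitary {ι : Type*} [Fintype ι] [DecidableEq ι]
    {A : EuclideanSpace ℂ ι →L[ℂ] EuclideanSpace ℂ ι} (hA : A ∈ unitary _) :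
    (matOf A)ᴴ * matOf A = 1 := by
  obtain ⟨m, rfl⟩ := toOp_surjective A
  apply toOp_injective
  have h : toOp mᴴ = star (toOp m) := map_star (Matrix.toEuclideanCLM (n := ι) (𝕜 := ℂ)) m
  rw [matOf_toOp, toOp_mul, h, toOp_one]
  exact (Unitary.mem_iff.1 hA).1

section Capacity

variable {X Y : Type*} [Fintype X] [DecidableEq X] [Fintype Y] [DecidableEq Y] [AddCommGroup Y]

lemma le_qtc {k : ℕ} (P P' : Set (X → Option Y)) {x : Fin k → X} (hx : Function.Injective x)
    (c : Fin k → AddChar Y ℂ) (D : X → Option Y) :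
    ‖toOp (projMat (P' ∩ agreeOff D x) * cOparMat x c * projMat (P ∩ agreeOff D x))‖
      ≤ qtc P P' k Set.univ := by
  refine le_csSup ⟨1, ?_⟩ ⟨x, c, D, hx, fun _ => Set.mem_univ _, ?_⟩
  · rintro v ⟨x, c, D, -, -, rfl⟩
    refine (ContinuousLinearMap.opNorm_comp_le _ _).trans
      (mul_le_one₀ (norm_toOp_projMat_le_one _) (norm_nonneg _) ?_)
    exact (ContinuousLinearMap.opNorm_comp_le _ _).trans
      (mul_le_one₀ (norm_toOp_cOparMat_le_one _ _) (norm_nonneg _) (norm_toOp_projMat_le_one _))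
  · rw [mul_assoc, toOp_mul, toOp_mul]

lemma qtc_nonneg (P P' : Set (X → Option Y)) (k : ℕ) (X₀ : Set X) : 0 ≤ qtc P P' k X₀ :=
  Real.sSup_nonneg (by rintro v ⟨x, c, D, -, -, rfl⟩; exact norm_nonneg _)

lemma cOparMat_apply_eq_zero {k : ℕ} (x : Fin k → X) (c : Fin k → AddChar Y ℂ)
    {D' D : X → Option Y} {a : X} (ha : ∀ i, x i ≠ a) (h : D' a ≠ D a) :
    cOparMat x c D' D = 0 := by
  rw [cOparMat_eq_cODBHom]
  refine tensorMat_apply_eq_zero (a := a) ?_ h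
  rw [Finset.prod_apply, Finset.prod_eq_one fun i _ => Pi.mulSingle_eq_of_ne (ha i).symm _,
    cOMat_one]

lemma norm_toOp_projMat_cOparMat_le_of_injective {k : ℕ} (P P' : Set (X → Option Y))
    {x : Fin k → X} (hx : Function.Injective x) (c : Fin k → AddChar Y ℂ) :
    ‖toOp (projMat P' * cOparMat x c * projMat P)‖ ≤ qtc P P' k Set.univ := by
  classical
  let f : (X → Option Y) → {a // ∀ i, x i ≠ a} → Option Y := fun D a => D a
  refine norm_toOp_le_of_blocks f (qtc_nonneg _ _ _ _) (fun D' D h => ?_) fun D => ?_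
  · obtain ⟨⟨a, ha⟩, h⟩ := Function.ne_iff.1 h
    rw [projMat_eq_diagonal, projMat_eq_diagonal, Matrix.mul_diagonal, Matrix.diagonal_mul,
      cOparMat_apply_eq_zero x c ha h]
    simp
  · have hf : {D' | f D' = f D} = agreeOff D x := by
      ext D'
      simp [agreeOff, f, funext_iff]
    have hP : ∀ Q Q' : Set (X → Option Y), projMat Q * projMat Q' = projMat (Q ∩ Q') := by
      intro Q Q'
      simp only [projMat_eq_diagonal, Matrix.diagonal_mul_diagonal]
      congr 1
      rw [Set.inter_indicator_one]
      rfl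
    have h := le_qtc P P' hx c D
    rw [← hP P, Set.inter_comm, ← hP] at h
    rw [hf]
    simpa only [mul_assoc] using h

lemma norm_toOp_projMat_cOparMat_le {k : ℕ} (hk : k ≤ Fintype.card X) (P P' : Set (X → Option Y))
    (x : Fin k → X) (c : Fin k → AddChar Y ℂ) :
    ‖toOp (projMat P' * cOparMat x c * projMat P)‖ ≤ qtc P P' k Set.univ := by
  obtain ⟨x', c', hx', h⟩ := exists_injective_cOparMat_eq hk x c
  rw [← h]
  exact norm_toOp_projMat_cOparMat_le_of_injective P P' hx' c'

end Capacity

section Chain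

variable {V : Type*} [NormedAddCommGroup V] [NormedSpace ℂ V]

lemma norm_chainOp_le_one {T : V →L[ℂ] V} {Us : ℕ → V →L[ℂ] V} (hT : ‖T‖ ≤ 1) (n : ℕ)
    (hU : ∀ s, 1 ≤ s → s ≤ n → ‖Us s‖ ≤ 1) : ‖chainOp T Us (n + 1)‖ ≤ 1 := by
  induction n with
  | zero => exact hT
  | succ n ih =>
    refine (ContinuousLinearMap.opNorm_comp_le _ _).trans (mul_le_one₀ hT (norm_nonneg _) ?_)
    exact (ContinuousLinearMap.opNorm_comp_le _ _).trans
      (mul_le_one₀ (hU _ le_add_self le_rfl) (norm_nonneg _)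
        (ih fun s h1 h2 => hU s h1 (h2.trans n.le_succ)))

/-- The transition norm of a chain of operators is at most the sum of its one-step transition
norms. -/
lemma norm_chainOp_transition_le {T : V →L[ℂ] V} {Us p p' : ℕ → V →L[ℂ] V} {c : ℕ → ℝ}
    (hT : ‖T‖ ≤ 1) (hp : ∀ s, ‖p s‖ ≤ 1) (hp' : ∀ s, ‖p' s‖ ≤ 1) (hadd : ∀ s, p s + p' s = 1)
    (hc : ∀ s, ‖p (s + 1) * (T * p' s)‖ ≤ c s) (n : ℕ)
    (hU : ∀ s, 1 ≤ s → s ≤ n → ‖Us s‖ ≤ 1) (hcomm : ∀ s, 1 ≤ s → s ≤ n → Commute (p s) (Us s)) :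
    ‖p (n + 1) * (chainOp T Us (n + 1) * p' 0)‖ ≤ ∑ s ∈ Finset.range (n + 1), c s := by
  induction n with
  | zero =>
    rw [zero_add, Finset.sum_range_one]
    exact hc 0
  | succ n ih =>
    rw [Finset.sum_range_succ]
    set W := chainOp T Us (n + 1) with hW
    have hWn : ‖W‖ ≤ 1 := norm_chainOp_le_one hT n fun s h1 h2 => hU s h1 (h2.trans n.le_succ)
    have hUn := hU (n + 1) le_add_self le_rfl
    have hsplit : p (n + 2) * (T * (Us (n + 1) * W) * p' 0)
        = p (n + 2) * T * Us (n + 1) * (p (n + 1) * (W * p' 0))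
          + p (n + 2) * (T * p' (n + 1)) * (Us (n + 1) * W * p' 0) := by
      have h1 : p (n + 2) * T * Us (n + 1) * (p (n + 1) * (W * p' 0))
          = p (n + 2) * T * p (n + 1) * (Us (n + 1) * W * p' 0) := by
        have := (hcomm (n + 1) le_add_self le_rfl).eq
        calc _ = p (n + 2) * T * (Us (n + 1) * p (n + 1)) * (W * p' 0) := by noncomm_ring
          _ = _ := by rw [← this]; noncomm_ring
      rw [h1]
      calc _ = p (n + 2) * T * 1 * (Us (n + 1) * W * p' 0) := by noncomm_ring
        _ = _ := by rw [← hadd (n + 1)]; noncomm_ring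
    have hb : ∀ {a b : V →L[ℂ] V}, ‖a‖ ≤ 1 → ‖b‖ ≤ 1 → ‖a * b‖ ≤ 1 := fun ha hb =>
      (norm_mul_le _ _).trans (mul_le_one₀ ha (norm_nonneg _) hb)
    change ‖p (n + 2) * (T * (Us (n + 1) * W) * p' 0)‖ ≤ _
    rw [hsplit]
    refine (norm_add_le _ _).trans (add_le_add ?_ ?_)
    · refine (norm_mul_le _ _).trans
        ((mul_le_of_le_one_left (norm_nonneg _) (hb (hb (hp _) hT) hUn)).trans ?_)
      exact ih (fun s h1 h2 => hU s h1 (h2.trans n.le_succ))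
        fun s h1 h2 => hcomm s h1 (h2.trans n.le_succ)
    · exact (norm_mul_le _ _).trans
        ((mul_le_of_le_one_right (norm_nonneg _) (hb (hb hUn hWn) (hp' 0))).trans (hc (n + 1)))

end Chain

theorem stmt_7 {X Y : Type*} [Fintype X] [DecidableEq X] [Nonempty X]
    [Fintype Y] [DecidableEq Y] [AddCommGroup Y]
    (k q d : ℕ) (hk : 1 ≤ k) (hkX : k ≤ Fintype.card X) (hq : 1 ≤ q) (hd : 1 ≤ d)
    -- the database properties `P_0, P_1, …, P_q`
    (P : ℕ → Set (X → Option Y))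
    -- the unitaries `U_1, …, U_{q-1}`
    (U : ℕ → (EuclideanSpace ℂ ((Fin k → X) × (Fin k → Y) × Fin d) →L[ℂ]
              EuclideanSpace ℂ ((Fin k → X) × (Fin k → Y) × Fin d)))
    (hU : ∀ i, 1 ≤ i → i ≤ q - 1 →
      U i ∈ unitary (EuclideanSpace ℂ ((Fin k → X) × (Fin k → Y) × Fin d) →L[ℂ]
        EuclideanSpace ℂ ((Fin k → X) × (Fin k → Y) × Fin d))) :
    ‖(toOp (projDBMat X Y k d (P q))).comp
        ((chainOp (toOp (cOkExtMat X Y k d))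
            (fun n => toOp (uExtMat X Y k d (U n))) q).comp
          (toOp (projDBMat X Y k d ((P 0)ᶜ))))‖
      ≤ ∑ s ∈ Finset.range q, qtc ((P s)ᶜ) (P (s + 1)) k Set.univ := by
  obtain ⟨n, rfl⟩ := Nat.exists_eq_add_of_le' hq
  have hproj : ∀ Q : Set (X → Option Y), ‖toOp (projDBMat X Y k d Q)‖ ≤ 1 := by
    intro Q
    rw [projDBMat_eq, projMat_eq_diagonal, ← Matrix.diagonal_one, Matrix.diagonal_kronecker_diagonal]
    refine norm_toOp_diagonal_le_one fun p => ?_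
    by_cases h : p.2 ∈ Q <;> simp [h]
  refine norm_chainOp_transition_le (p := fun s => toOp (projDBMat X Y k d (P s)))
    (p' := fun s => toOp (projDBMat X Y k d (P s)ᶜ)) norm_toOp_cOkExtMat_le_one
    (fun s => hproj _) (fun s => hproj _) (fun s => ?_) (fun s => ?_) n (fun s h1 h2 => ?_)
    (fun s h1 h2 => ?_)
  · rw [← toOp_add, projDBMat_eq, projDBMat_eq, ← Matrix.kronecker_add, projMat_add_compl,
      Matrix.one_kronecker_one, toOp_one]
    rfl
  · have h := norm_toOp_kronecker_cOkExtMat_le (d := d) (qtc_nonneg _ _ _ _)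
      (norm_toOp_projMat_cOparMat_le hkX (P s)ᶜ (P (s + 1)))
    rwa [← projDBMat_eq, ← projDBMat_eq, mul_assoc, toOp_mul, toOp_mul] at h
  · refine norm_toOp_le_one_of_unitary ?_
    rw [uExtMat_eq, Matrix.conjTranspose_kronecker, ← Matrix.mul_kronecker_mul,
      matOf_unitary (hU s h1 h2), Matrix.conjTranspose_one, mul_one, Matrix.one_kronecker_one]
  · change (toOp _).comp (toOp _) = (toOp _).comp (toOp _)
    rw [← toOp_mul, ← toOp_mul, projDBMat_eq, uExtMat_eq, ← Matrix.mul_kronecker_mul,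
      ← Matrix.mul_kronecker_mul, one_mul, mul_one, one_mul, mul_one]

end
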